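/- arXiv:2306.17559 — 3 statements merged into one kernel-verified Lean document; each statement's English description precedes it below -/
import Mathlib

section
/- Let t ≥ 3, let G be a subgroup of U(2^N), and let L = Σ_P γ'_P P^⊗t (sum over unsigned Pauli operators P, coefficients γ'_P ∈ ℂ) satisfy U^⊗t L U†^⊗t = L for all U in the G-symmetric unitary group U_{N,G}. Then for every unsigned Pauli P with γ'_P ≠ 0 and every U ∈ U_{N,G}, one has U P U† = P. -/
open Matrix MeasureTheory

/-- Basis index for `N` qubits. -/
abbrev QubitIdx (N : ℕ) := Fin N → Fin 2

/-- Linear operators on the Hilbert space `(ℂ²)^⊗N`, as matrices. -/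
abbrev Op (N : ℕ) := Matrix (QubitIdx N) (QubitIdx N) ℂ

/-- The single-qubit Pauli matrices I, X, Y, Z. -/
noncomputable def σ1 : Fin 4 → Matrix (Fin 2) (Fin 2) ℂ
  | 0 => 1
  | 1 => !![0, 1; 1, 0]
  | 2 => !![0, -Complex.I; Complex.I, 0]
  | 3 => !![1, 0; 0, -1]

/-- The unsigned Pauli operator on `N` qubits indexed by `a : Fin N → Fin 4`
(the Kronecker product of the single-qubit Paulis `σ1 (a k)`). -/
noncomputable def pauli {N : ℕ} (a : Fin N → Fin 4) : Op N :=
  Matrix.of fun i j => ∏ k, σ1 (a k) (i k) (j k)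

/-- The phase factors `{±1, ±i}`. -/
def phases : Set ℂ := {1, -1, Complex.I, -Complex.I}

/-- The Pauli group on `N` qubits: phased unsigned Paulis. -/
def PauliGroup (N : ℕ) : Set (Op N) :=
  {P | ∃ c ∈ phases, ∃ a : Fin N → Fin 4, P = c • pauli a}

/-- A Clifford operator: a unitary whose conjugation action preserves the Pauli group. -/
def IsClifford {N : ℕ} (U : Op N) : Prop :=
  U ∈ Matrix.unitaryGroup (QubitIdx N) ℂ ∧
    ∀ P ∈ PauliGroup N, U * P * Uᴴ ∈ PauliGroup N

/-- The `G`-symmetric unitary group `U_{N,G}`: unitaries commuting with every element of `G`. -/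
def UnitarySym (N : ℕ) (G : Set (Op N)) : Set (Op N) :=
  {U | U ∈ Matrix.unitaryGroup (QubitIdx N) ℂ ∧ ∀ g ∈ G, U * g = g * U}

/-- The `G`-symmetric Clifford group `C_{N,G}`. -/
def CliffordSym (N : ℕ) (G : Set (Op N)) : Set (Op N) :=
  {U | IsClifford U ∧ U ∈ UnitarySym N G}

/-- `G` is a subgroup of the unitary group on `N` qubits. -/
def IsUnitarySubgroup {N : ℕ} (G : Set (Op N)) : Prop :=
  (∀ g ∈ G, g ∈ Matrix.unitaryGroup (QubitIdx N) ℂ) ∧ (1 : Op N) ∈ G ∧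
    (∀ g ∈ G, ∀ h ∈ G, g * h ∈ G) ∧ (∀ g ∈ G, gᴴ ∈ G)

/-- Operators on the `t`-fold tensor power `H^⊗t` of the `N`-qubit Hilbert space. -/
abbrev BigOp (N t : ℕ) := Matrix (Fin t → QubitIdx N) (Fin t → QubitIdx N) ℂ

/-- The `t`-fold tensor (Kronecker) power `A^⊗t` of an operator `A`. -/
noncomputable def tpow {N : ℕ} (t : ℕ) (A : Op N) : BigOp N t :=
  Matrix.of fun i j => ∏ s, A (i s) (j s)

noncomputable instance OpMeasurableSpace {N : ℕ} : MeasurableSpace (Op N) := borel (Op N)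

/-- The `t`-fold twirling channel `Φ_{t,μ}(L) = ∫ U^⊗t L (U^⊗t)† dμ(U)`, defined entrywise. -/
noncomputable def twirl {N : ℕ} (t : ℕ) (μ : Measure (Op N)) (L : BigOp N t) : BigOp N t :=
  Matrix.of fun i j => ∫ U, (tpow t U * L * (tpow t U)ᴴ) i j ∂μ

/-- The Kronecker power `A^⊗N` of a single-qubit operator, as an operator on `N` qubits. -/
noncomputable def kronPow {N : ℕ} (A : Matrix (Fin 2) (Fin 2) ℂ) : Op N :=
  Matrix.of fun i j => ∏ k, A (i k) (j k)

/-- The single-qubit unitary `e^{iθZ}`. -/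
noncomputable def expZ (θ : ℝ) : Matrix (Fin 2) (Fin 2) ℂ :=
  !![Complex.exp ((θ : ℂ) * Complex.I), 0; 0, Complex.exp (-(θ : ℂ) * Complex.I)]

/-- The permutation operator `V_σ` on the threefold tensor power `H^⊗3`. -/
noncomputable def permOp {N : ℕ} (σ : Equiv.Perm (Fin 3)) : BigOp N 3 :=
  Matrix.of fun i j => if i = j ∘ ⇑σ⁻¹ then 1 else 0

/-- The tensor product `G₁ ⊗ G₂ ⊗ G₃` as an operator on `H^⊗3`. -/
noncomputable def tprod3 {N : ℕ} (G₁ G₂ G₃ : Op N) : BigOp N 3 :=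
  Matrix.of fun i j => G₁ (i 0) (j 0) * G₂ (i 1) (j 1) * G₃ (i 2) (j 2)

/-! For trace-orthogonal operators `P_a`, the symmetric tensor `L = ∑ γ_a P_a^⊗t` is an orthogonal
decomposition, and for `t ≥ 3` such a decomposition is rigid: contract two decompositions
`∑ γ_a Q_a^⊗t = ∑ γ_a P_a^⊗t` with `Q_a` in one slot and `P_a` in `t - 2 ≥ 1` slots; a single term
survives on each side, and the free slot shows that `Q_a` is proportional to `P_a` as soon as
`tr (Q_a P_a) ≠ 0`. With `Q_a = U P_a U†` this forces `U P_a U† = ± P_a`, and the sign is `+` for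
`U` close to `1`.

Hence the symmetric unitaries close to `1` commute with `P_a`. Differentiating `s ↦ exp (isH)` at
`0`, so does every Hermitian `H` in the commutant of `G`, and these span the commutant. -/

section PiKronecker

variable {ι n R : Type*} [Fintype ι]

/-- The Kronecker product of a finite family of square matrices, indexed by functions `ι → n`.
It covers both `pauli` and, for constant families, the tensor powers `tpow`. -/
def piKronecker [CommMonoid R] (A : ι → Matrix n n R) : Matrix (ι → n) (ι → n) R :=
  Matrix.of fun i j => ∏ s, A s (i s) (j s)

theorem conjTranspose_piKronecker [CommSemiring R] [StarRing R] (A : ι → Matrix n n R) :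
    (piKronecker A)ᴴ = piKronecker fun s => (A s)ᴴ := by
  ext i j
  simp [piKronecker]

variable [DecidableEq ι] [Fintype n] [CommSemiring R]

theorem piKronecker_mul (A B : ι → Matrix n n R) :
    piKronecker A * piKronecker B = piKronecker fun s => A s * B s := by
  ext i j
  simp only [piKronecker, Matrix.mul_apply, Matrix.of_apply, Finset.prod_univ_sum,
    Fintype.piFinset_univ, Finset.prod_mul_distrib]

theorem trace_piKronecker (A : ι → Matrix n n R) :
    (piKronecker A).trace = ∏ s, (A s).trace := by
  simp only [piKronecker, Matrix.trace, Matrix.diag_apply, Matrix.of_apply, Finset.prod_univ_sum,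
    Fintype.piFinset_univ]

variable {κ : Type*} [Fintype κ]

theorem conj_sum_smul_piKronecker [StarRing R] (U : Matrix n n R) (γ : κ → R)
    (P : κ → Matrix n n R) :
    piKronecker (fun _ : ι => U) * (∑ a, γ a • piKronecker fun _ : ι => P a) *
        (piKronecker fun _ : ι => U)ᴴ =
      ∑ a, γ a • piKronecker fun _ : ι => U * P a * Uᴴ := by
  simp only [Matrix.mul_sum, Matrix.sum_mul, Matrix.mul_smul, Matrix.smul_mul,
    conjTranspose_piKronecker, piKronecker_mul]

theorem trace_sum_smul_piKronecker_mul (γ : κ → R) (P : κ → Matrix n n R)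
    (B : ι → Matrix n n R) :
    ((∑ a, γ a • piKronecker fun _ : ι => P a) * piKronecker B).trace =
      ∑ a, γ a * ∏ s, (P a * B s).trace := by
  simp only [Matrix.sum_mul, Matrix.smul_mul, Matrix.trace_sum, Matrix.trace_smul,
    piKronecker_mul, trace_piKronecker, smul_eq_mul]

end PiKronecker

section Rigidity

variable {κ K : Type*} [Fintype κ] [Field K] {t : ℕ}

theorem exists_eq_smul_of_sum_mul_prod_eq {X : Type*} (ht : 3 ≤ t) {γ : κ → K} {f g : κ → X → K}
    (h : ∀ x : Fin t → X, ∑ b, γ b * ∏ s, f b (x s) = ∑ b, γ b * ∏ s, g b (x s))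
    {a : κ} (hγ : γ a ≠ 0) {y z : X} (hfy : ∀ b ≠ a, f b y = 0) (hgz : ∀ b ≠ a, g b z = 0)
    (hy : f a y ≠ 0) (hz : f a z ≠ 0) : ∃ c : K, f a = c • g a := by
  obtain ⟨t, rfl⟩ := Nat.exists_eq_add_of_le' ht
  refine ⟨g a y * g a z ^ (t + 1) / (f a y * f a z ^ (t + 1)), funext fun x => ?_⟩
  have hx := h (Fin.cons x (Fin.cons y fun _ => z))
  simp only [Fin.prod_univ_succ (n := t + 2), Fin.prod_univ_succ (n := t + 1), Fin.cons_zero,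
    Fin.cons_succ, Finset.prod_const, Finset.card_univ, Fintype.card_fin] at hx
  rw [Finset.sum_eq_single a (fun b _ hb => by simp [hfy b hb]) (by simp),
    Finset.sum_eq_single a (fun b _ hb => by simp [hgz b hb]) (by simp)] at hx
  have hfg := mul_left_cancel₀ hγ hx
  rw [Pi.smul_apply, smul_eq_mul, div_mul_eq_mul_div,
    eq_div_iff (mul_ne_zero hy (pow_ne_zero _ hz))]
  linear_combination hfg

theorem eq_or_eq_neg_of_sum_smul_piKronecker_eq {n : Type*} [Fintype n] (ht : 3 ≤ t) {γ : κ → K}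
    {P Q : κ → Matrix n n K}
    (h : ∑ b, γ b • piKronecker (fun _ : Fin t => Q b) =
      ∑ b, γ b • piKronecker fun _ : Fin t => P b)
    (hP : Pairwise fun b c => (P b * P c).trace = 0)
    (hQ : Pairwise fun b c => (Q b * Q c).trace = 0)
    {a : κ} (hγ : γ a ≠ 0) (hPa : (P a * P a).trace ≠ 0)
    (hQa : (Q a * Q a).trace = (P a * P a).trace) (hQP : (Q a * P a).trace ≠ 0) :
    Q a = P a ∨ Q a = -P a := by
  have hcontract (x : Fin t → Matrix n n K) :
      ∑ b, γ b * ∏ s, (Q b * x s).trace = ∑ b, γ b * ∏ s, (P b * x s).trace := by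
    rw [← trace_sum_smul_piKronecker_mul, h, trace_sum_smul_piKronecker_mul]
  obtain ⟨c, hc⟩ := exists_eq_smul_of_sum_mul_prod_eq (f := fun b x => (Q b * x).trace)
    (g := fun b x => (P b * x).trace) ht hcontract hγ (y := Q a) (z := P a)
    (fun _ hb => hQ hb) (fun _ hb => hP hb) (hQa.trans_ne hPa) hQP
  have hQc : Q a = c • P a := Matrix.ext_iff_trace_mul_right.mpr fun x => by
    simpa using congrFun hc x
  have hsq : c * c = 1 := by
    rw [hQc] at hQa
    refine mul_right_cancel₀ hPa ?_
    simpa [mul_assoc] using hQa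
  rcases mul_self_eq_one_iff.mp hsq with rfl | rfl
  · exact .inl (by simpa using hQc)
  · exact .inr (by simpa using hQc)

end Rigidity

section Commutant

open scoped ComplexStarModule Topology

theorem mem_starSubalgebra_centralizer_of_mem_unitary {R A : Type*} [CommSemiring R] [StarRing R]
    [Semiring A] [StarRing A] [Algebra R A] [StarModule R A] {S : Set A} {u : A}
    (hu : u ∈ unitary A) (huS : ∀ g ∈ S, Commute u g) :
    u ∈ StarSubalgebra.centralizer R S := by
  refine (StarSubalgebra.mem_centralizer_iff R).mpr fun g hg => ⟨(huS g hg).eq.symm, ?_⟩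
  have hstar : Commute (star u) g := Commute.units_inv_left
    (u := Unitary.toUnits ⟨u, hu⟩) (huS g hg)
  simpa using hstar.star_star.eq.symm

theorem commute_of_eventually_commute_exp_smul {A : Type*} [NormedRing A] [NormedAlgebra ℝ A]
    [CompleteSpace A] {x y : A} (h : ∀ᶠ s : ℝ in 𝓝 0, Commute (NormedSpace.exp (s • x)) y) :
    Commute x y := by
  have hexp : HasDerivAt (fun s : ℝ => NormedSpace.exp (s • x)) x 0 := by
    simpa using hasDerivAt_exp_smul_const (𝕂 := ℝ) x (0 : ℝ)
  have hcomm := (hexp.mul_const y).sub (hexp.const_mul y)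
  refine sub_eq_zero.mp (hcomm.unique ((hasDerivAt_const 0 0).congr_of_eventuallyEq ?_))
  filter_upwards [h] with s hs using sub_eq_zero.mpr hs.eq

variable {A : Type*} [NormedRing A] [NormedAlgebra ℂ A] [CompleteSpace A] [StarRing A]
  [ContinuousStar A] [StarModule ℂ A] {S : Set A} {y : A}

theorem commute_of_isSelfAdjoint_of_eventually_commute_unitary
    (h : ∀ᶠ u in 𝓝 (1 : A), u ∈ unitary A → (∀ g ∈ S, Commute u g) → Commute u y)
    {x : A} (hx : IsSelfAdjoint x) (hxS : ∀ g ∈ S, Commute x g) : Commute x y := by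
  have hIx : Commute (Complex.I • x) y := by
    refine commute_of_eventually_commute_exp_smul ?_
    have hlim : Filter.Tendsto (fun s : ℝ => NormedSpace.exp (s • Complex.I • x)) (𝓝 0) (𝓝 1) := by
      simpa using (differentiable_exp_smul_const ℝ (Complex.I • x)).continuous.tendsto 0
    filter_upwards [hlim.eventually h] with s hs
    refine hs ?_ fun g hg => (((hxS g hg).smul_left Complex.I).smul_left s).exp_left
    rw [smul_comm]
    exact (selfAdjoint.expUnitary (s • ⟨x, hx⟩)).2
  simpa [smul_smul] using hIx.smul_left (-Complex.I)

theorem commute_of_mem_centralizer_of_eventually_commute_unitary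
    (h : ∀ᶠ u in 𝓝 (1 : A), u ∈ unitary A → (∀ g ∈ S, Commute u g) → Commute u y)
    {x : A} (hx : x ∈ StarSubalgebra.centralizer ℂ S) : Commute x y := by
  have hxS (g) (hg : g ∈ S) : Commute x g :=
    ((StarSubalgebra.mem_centralizer_iff ℂ).mp hx g hg).1.symm
  have hstarS (g) (hg : g ∈ S) : Commute (star x) g :=
    ((StarSubalgebra.mem_centralizer_iff ℂ).mp (star_mem hx) g hg).1.symm
  have hre : Commute (ℜ x : A) y := by
    refine commute_of_isSelfAdjoint_of_eventually_commute_unitary h (ℜ x).2 fun g hg => ?_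
    rw [realPart_apply_coe]
    exact ((hxS g hg).add_left (hstarS g hg)).smul_left _
  have him : Commute (ℑ x : A) y := by
    refine commute_of_isSelfAdjoint_of_eventually_commute_unitary h (ℑ x).2 fun g hg => ?_
    rw [imaginaryPart_apply_coe]
    exact (((hxS g hg).sub_left (hstarS g hg)).smul_left _).smul_left _
  rw [← realPart_add_I_smul_imaginaryPart x]
  exact hre.add_left (him.smul_left Complex.I)

end Commutant

section TraceOrthogonal

open scoped Topology

variable {n κ : Type*} [Fintype n] [DecidableEq n] [Fintype κ]

theorem trace_conj_mul_conj {R : Type*} [CommRing R] [StarRing R] {U : Matrix n n R}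
    (hU : U ∈ Matrix.unitaryGroup n R) (A B : Matrix n n R) :
    (U * A * Uᴴ * (U * B * Uᴴ)).trace = (A * B).trace := by
  have hmul : U * A * Uᴴ * (U * B * Uᴴ) = U * (A * B) * Uᴴ :=
    (map_mul (Unitary.conjStarAlgAut R _ ⟨U, hU⟩) A B).symm
  rw [hmul]
  exact Matrix.trace_units_conj (Unitary.toUnits ⟨U, hU⟩) (A * B)

theorem conj_eq_or_eq_neg_of_conj_sum_smul_piKronecker_eq {R : Type*} [Field R] [StarRing R]
    {P : κ → Matrix n n R} (hP : Pairwise fun a b => (P a * P b).trace = 0)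
    {t : ℕ} (ht : 3 ≤ t) {γ : κ → R} {U : Matrix n n R} (hU : U ∈ Matrix.unitaryGroup n R)
    (hL : piKronecker (fun _ : Fin t => U) * (∑ a, γ a • piKronecker fun _ : Fin t => P a) *
        (piKronecker fun _ : Fin t => U)ᴴ = ∑ a, γ a • piKronecker fun _ : Fin t => P a)
    {a : κ} (hγ : γ a ≠ 0) (hPa : (P a * P a).trace ≠ 0)
    (hUP : (U * P a * Uᴴ * P a).trace ≠ 0) :
    U * P a * Uᴴ = P a ∨ U * P a * Uᴴ = -P a :=
  eq_or_eq_neg_of_sum_smul_piKronecker_eq (Q := fun b => U * P b * Uᴴ) ht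
    ((conj_sum_smul_piKronecker U γ P).symm.trans hL) hP
    (fun _ _ hbc => (trace_conj_mul_conj hU _ _).trans (hP hbc)) hγ hPa
    (trace_conj_mul_conj hU _ _) hUP

theorem eventually_commute_of_conj_sum_smul_piKronecker_eq {P : κ → Matrix n n ℂ}
    (hP : Pairwise fun a b => (P a * P b).trace = 0) {t : ℕ} (ht : 3 ≤ t) {γ : κ → ℂ} {a : κ}
    (hγ : γ a ≠ 0) (hPa : (P a * P a).trace ≠ 0) :
    ∀ᶠ U in 𝓝 (1 : Matrix n n ℂ), U ∈ Matrix.unitaryGroup n ℂ →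
      piKronecker (fun _ : Fin t => U) * (∑ a, γ a • piKronecker fun _ : Fin t => P a) *
        (piKronecker fun _ : Fin t => U)ᴴ = ∑ a, γ a • piKronecker (fun _ : Fin t => P a) →
      Commute U (P a) := by
  have hcont : Continuous fun U : Matrix n n ℂ => (U * P a * Uᴴ * P a).trace :=
    (((continuous_id.matrix_mul continuous_const).matrix_mul
      continuous_id.matrix_conjTranspose).matrix_mul continuous_const).matrix_trace
  have hone : ((1 : Matrix n n ℂ) * P a * 1ᴴ * P a).trace = (P a * P a).trace := by simp
  filter_upwards [hcont.continuousAt.eventually_ne (hone.trans_ne hPa),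
    hcont.continuousAt.eventually_ne (hone.trans_ne (self_ne_neg.mpr hPa))] with U hUP hUneg hU hL
  have hsign := conj_eq_or_eq_neg_of_conj_sum_smul_piKronecker_eq hP ht hU hL hγ hPa hUP
  exact (commute_unitary_iff_star_right_conjugate hU).mpr
    (hsign.resolve_right fun h => hUneg (by simp [h]))

theorem stmt7_general {P : κ → Matrix n n ℂ} (hP : Pairwise fun a b => (P a * P b).trace = 0)
    {t : ℕ} (ht : 3 ≤ t) (G : Set (Matrix n n ℂ)) (γ : κ → ℂ)
    (hL : ∀ U ∈ Matrix.unitaryGroup n ℂ, (∀ g ∈ G, Commute U g) →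
      piKronecker (fun _ : Fin t => U) * (∑ a, γ a • piKronecker fun _ : Fin t => P a) *
        (piKronecker fun _ : Fin t => U)ᴴ = ∑ a, γ a • piKronecker fun _ : Fin t => P a)
    {a : κ} (hγ : γ a ≠ 0) (hPa : (P a * P a).trace ≠ 0) {U : Matrix n n ℂ}
    (hU : U ∈ Matrix.unitaryGroup n ℂ) (hUG : ∀ g ∈ G, Commute U g) : U * P a * Uᴴ = P a := by
  have hnear : ∀ᶠ V in 𝓝 (1 : Matrix n n ℂ), V ∈ Matrix.unitaryGroup n ℂ →
      (∀ g ∈ G, Commute V g) → Commute V (P a) :=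
    (eventually_commute_of_conj_sum_smul_piKronecker_eq hP ht hγ hPa).mono
      fun V h hV hVG => h hV (hL V hV hVG)
  have hcentral : U ∈ StarSubalgebra.centralizer ℂ G :=
    mem_starSubalgebra_centralizer_of_mem_unitary hU hUG
  open scoped Matrix.Norms.L2Operator in
  exact (commute_unitary_iff_star_right_conjugate hU).mp
    (commute_of_mem_centralizer_of_eventually_commute_unitary hnear hcentral)

end TraceOrthogonal

theorem trace_σ1_mul_σ1 (a b : Fin 4) : (σ1 a * σ1 b).trace = if a = b then 2 else 0 := by
  fin_cases a <;> fin_cases b <;>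
    simp [σ1, Matrix.trace, Fin.sum_univ_two] <;> norm_num

theorem trace_pauli_mul_pauli {N : ℕ} (a b : Fin N → Fin 4) :
    (pauli a * pauli b).trace = if a = b then 2 ^ N else 0 := by
  calc (pauli a * pauli b).trace
    _ = (piKronecker fun k => σ1 (a k) * σ1 (b k)).trace :=
      congrArg Matrix.trace (piKronecker_mul (fun k => σ1 (a k)) fun k => σ1 (b k))
    _ = if a = b then 2 ^ N else 0 := by
      simp [trace_piKronecker, trace_σ1_mul_σ1, Fintype.prod_ite_zero, funext_iff]

/-- if `L = Σ_P γ'_P P^⊗t` with `t ≥ 3` is invariant under `U^⊗t`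
conjugation for all `U ∈ U_{N,G}`, then every Pauli appearing in `L` with nonzero
coefficient is fixed by all `U ∈ U_{N,G}`. -/
theorem stmt7 {N : ℕ} (t : ℕ) (ht : 3 ≤ t)
    (G : Set (Op N)) (hG : IsUnitarySubgroup G)
    (γ : (Fin N → Fin 4) → ℂ)
    (hL : ∀ U ∈ UnitarySym N G,
      tpow t U * (∑ a : Fin N → Fin 4, γ a • tpow t (pauli a)) * (tpow t U)ᴴ =
        ∑ a : Fin N → Fin 4, γ a • tpow t (pauli a)) :
    ∀ a : Fin N → Fin 4, γ a ≠ 0 → ∀ U ∈ UnitarySym N G, U * pauli a * Uᴴ = pauli a := by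
  intro a ha U hU
  exact stmt7_general (fun b c hbc => by simp [trace_pauli_mul_pauli, hbc]) ht G γ
    (fun V hV hVG => hL V ⟨hV, hVG⟩) ha (by simp [trace_pauli_mul_pauli]) hU.1 hU.2
end

section
/- Let Q be any subgroup of the Pauli group on n qubits. Then there exists a Clifford operator W and nonnegative integers n₁, n₂, n₃ with n₁ + n₂ + n₃ = n such that {±1,±i}·W Q W† = {±1,±i}·({I,X,Y,Z}^⊗n₁ ⊗ {I,Z}^⊗n₂ ⊗ {I}^⊗n₃), i.e., up to phases every Pauli subgroup is Clifford-equivalent to a standard form consisting of a full Pauli block, a diagonal Z block, and a trivial block. -/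
open Matrix MeasureTheory

/-!
Modulo phases the Pauli group is the symplectic space `(𝔽₂²)ⁿ`: Pauli operators multiply as their
labels add, and they commute exactly when the symplectic form of their labels vanishes. Conjugation
by `(1 + iP) / √2`, for a Pauli operator `P` with label `v`, fixes the Pauli operators commuting
with `P` and multiplies the others by `P` up to a phase, so it acts on labels as the symplectic
transvection along `v`. Hence every product of transvections comes from a Clifford operator, and it
remains to bring the subspace of labels of `Q` into standard form by transvections. Since these are
transitive on nonzero vectors and on hyperbolic pairs, a hyperbolic pair in the subspace can be
moved to the labels of `X` and `Z` on the first qubit; if there is none, any nonzero vector can be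
moved to the label of `Z`. In both cases the subspace splits along the first qubit and one recurses
on the remaining ones.
-/

/-! ### Groups generated by symplectic transvections -/

section Transvections

variable {K V : Type*} [Field K] [AddCommGroup V] [Module K V] {B : LinearMap.BilinForm K V}

/-- The group generated by the transvections `u ↦ u + c B(u, v) v`. For an alternating form these
are isometries. -/
def transvectionSubgroup (B : LinearMap.BilinForm K V) : Subgroup (V ≃ₗ[K] V) :=
  Subgroup.closure {e | ∃ c v, ∀ u, e u = u + (c * B u v) • v}

theorem exists_mem_transvectionSubgroup (hB : B.IsAlt) (c : K) (v : V) :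
    ∃ e ∈ transvectionSubgroup B, ∀ u, e u = u + (c * B u v) • v := by
  have hv : (c • B.flip v) v = 0 := by simp [hB.self_eq_zero v]
  exact ⟨LinearEquiv.transvection hv, Subgroup.subset_closure ⟨c, v, fun _ => rfl⟩, fun _ => rfl⟩

theorem isOrthogonal_of_mem_transvectionSubgroup (hB : B.IsAlt) {g : V ≃ₗ[K] V}
    (hg : g ∈ transvectionSubgroup B) : B.IsOrthogonal g := by
  induction hg using Subgroup.closure_induction with
  | mem e he =>
    obtain ⟨c, v, he⟩ := he
    intro u w
    simp only [he, map_add, map_smul, LinearMap.add_apply, LinearMap.smul_apply, smul_eq_mul,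
      hB.self_eq_zero v]
    linear_combination -(c * B u v) * LinearMap.IsAlt.neg hB v w
  | one => exact fun _ _ => rfl
  | mul g h _ _ hg hh => exact fun u w => (hg _ _).trans (hh u w)
  | inv g _ hg =>
    intro u w
    rw [← hg, LinearEquiv.coe_inv, g.apply_symm_apply, g.apply_symm_apply]

theorem exists_transvection_map_eq_of_apply_ne_zero (hB : B.IsAlt) {u v : V} (h : B u v ≠ 0) :
    ∃ g ∈ transvectionSubgroup B, g u = v ∧ ∀ w, B w u = B w v → g w = w := by
  obtain ⟨g, hg, hg_apply⟩ := exists_mem_transvectionSubgroup hB (B u v)⁻¹ (v - u)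
  refine ⟨g, hg, ?_, fun w hw => ?_⟩
  · rw [hg_apply, map_sub, hB.self_eq_zero, sub_zero, inv_mul_cancel₀ h, one_smul,
      add_sub_cancel]
  · rw [hg_apply, map_sub, hw, sub_self, mul_zero, zero_smul, add_zero]

theorem exists_apply_ne_zero_and_apply_ne_zero {f g : Module.Dual K V} (hf : f ≠ 0) (hg : g ≠ 0) :
    ∃ w, f w ≠ 0 ∧ g w ≠ 0 := by
  obtain ⟨x, hx⟩ := DFunLike.ne_iff.mp hf
  obtain ⟨y, hy⟩ := DFunLike.ne_iff.mp hg
  rw [LinearMap.zero_apply] at hx hy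
  by_cases hgx : g x = 0
  · by_cases hfy : f y = 0
    · exact ⟨x + y, by simpa [hfy] using hx, by simpa [hgx] using hy⟩
    · exact ⟨y, hfy, hy⟩
  · exact ⟨x, hx, hgx⟩

theorem exists_transvection_map_eq (hB : B.IsAlt) (hs : B.SeparatingLeft) {u v : V}
    (hu : u ≠ 0) (hv : v ≠ 0) : ∃ g ∈ transvectionSubgroup B, g u = v := by
  have hker : ∀ {x}, x ≠ 0 → B x ≠ 0 := fun hx h => hx (hs _ fun y => by simp [h])
  obtain ⟨w, huw, hvw⟩ := exists_apply_ne_zero_and_apply_ne_zero (hker hu) (hker hv)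
  obtain ⟨g, hg, hgu, -⟩ := exists_transvection_map_eq_of_apply_ne_zero hB huw
  obtain ⟨h, hh, hhw, -⟩ :=
    exists_transvection_map_eq_of_apply_ne_zero hB (mt hB.eq_iff.mpr hvw)
  exact ⟨h * g, mul_mem hh hg, by rw [LinearEquiv.mul_apply, hgu, hhw]⟩

theorem exists_transvection_fix_map_eq (hB : B.IsAlt) {e v w : V} (hev : B e v = B e w)
    (hew : B e w ≠ 0) : ∃ g ∈ transvectionSubgroup B, g e = e ∧ g v = w := by
  by_cases hvw : B v w = 0
  · -- Pass through `v + e`, which pairs nontrivially with both `v` and `w`.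
    obtain ⟨g, hg, hgv, hge⟩ := exists_transvection_map_eq_of_apply_ne_zero hB
      (u := v) (v := v + e) (by simpa [hB.self_eq_zero] using mt hB.eq_iff.mp (hev ▸ hew))
    obtain ⟨h, hh, hhv, hhe⟩ := exists_transvection_map_eq_of_apply_ne_zero hB
      (u := v + e) (v := w) (by simpa [hvw] using hew)
    refine ⟨h * g, mul_mem hh hg, ?_, by rw [LinearEquiv.mul_apply, hgv, hhv]⟩
    rw [LinearEquiv.mul_apply, hge e (by simp [hB.self_eq_zero]),
      hhe e (by simp [hB.self_eq_zero, hev])]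
  · obtain ⟨g, hg, hgv, hge⟩ := exists_transvection_map_eq_of_apply_ne_zero hB hvw
    exact ⟨g, hg, hge e hev, hgv⟩

theorem exists_transvection_map_pair_eq (hB : B.IsAlt) (hs : B.SeparatingLeft) {u v e f : V}
    (h : B u v = B e f) (hef : B e f ≠ 0) :
    ∃ g ∈ transvectionSubgroup B, g u = e ∧ g v = f := by
  have hu : u ≠ 0 := by
    rintro rfl
    exact hef (by simpa using h.symm)
  have he : e ≠ 0 := by
    rintro rfl
    simp at hef
  obtain ⟨g, hg, rfl⟩ := exists_transvection_map_eq hB hs hu he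
  obtain ⟨k, hk, hkg, hkv⟩ := exists_transvection_fix_map_eq hB (v := g v) (w := f)
    ((isOrthogonal_of_mem_transvectionSubgroup hB hg u v).trans h) hef
  exact ⟨k * g, mul_mem hk hg, hkg, hkv⟩

end Transvections

/-! ### Subspaces of the standard symplectic space -/

section PhaseSpace

variable {K : Type*} [Field K] {n : ℕ}

/-- The standard symplectic space of dimension `2n`; the two components at each index are the
`X` and `Z` coordinates of the corresponding qubit. -/
abbrev PhaseSpace (K : Type*) (n : ℕ) := Fin n → K × K

/-- The standard symplectic form on `PhaseSpace K n`. -/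
def sympForm (K : Type*) [Field K] (n : ℕ) : LinearMap.BilinForm K (PhaseSpace K n) :=
  ∑ k,
    let X := LinearMap.fst K K K ∘ₗ LinearMap.proj k
    let Z := LinearMap.snd K K K ∘ₗ LinearMap.proj k
    (LinearMap.mul K K).compl₁₂ X Z - (LinearMap.mul K K).compl₁₂ Z X

theorem sympForm_apply (u v : PhaseSpace K n) :
    sympForm K n u v = ∑ k, ((u k).1 * (v k).2 - (u k).2 * (v k).1) := by
  simp [sympForm, LinearMap.sum_apply]

theorem sympForm_cons (x y : K × K) (u v : PhaseSpace K n) :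
    sympForm K (n + 1) (Fin.cons x u) (Fin.cons y v) =
      (x.1 * y.2 - x.2 * y.1) + sympForm K n u v := by
  simp only [sympForm_apply, Fin.sum_univ_succ, Fin.cons_zero, Fin.cons_succ]

theorem sympForm_single (u : PhaseSpace K n) (k : Fin n) (x : K × K) :
    sympForm K n u (Pi.single k x) = (u k).1 * x.2 - (u k).2 * x.1 := by
  rw [sympForm_apply, Finset.sum_eq_single k]
  · simp
  · intro i _ hi
    simp [hi]
  · simp

theorem isAlt_sympForm : (sympForm K n).IsAlt := fun u => by
  rw [sympForm_apply]
  exact Finset.sum_eq_zero fun k _ => by ring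

theorem separatingLeft_sympForm : (sympForm K n).SeparatingLeft := by
  refine fun u hu => funext fun k => Prod.ext ?_ ?_
  · simpa [sympForm_single] using hu (Pi.single k (0, 1))
  · simpa [sympForm_single] using hu (Pi.single k (1, 0))

theorem exists_transvection_apply_cons {g : PhaseSpace K n ≃ₗ[K] PhaseSpace K n}
    (hg : g ∈ transvectionSubgroup (sympForm K n)) :
    ∃ g' ∈ transvectionSubgroup (sympForm K (n + 1)),
      ∀ x v, g' (Fin.cons x v) = Fin.cons x (g v) := by
  induction hg using Subgroup.closure_induction with
  | mem e he =>
    obtain ⟨c, v, he⟩ := he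
    obtain ⟨e', he', he'_apply⟩ :=
      exists_mem_transvectionSubgroup isAlt_sympForm c (Fin.cons 0 v : PhaseSpace K (n + 1))
    refine ⟨e', he', fun x u => ?_⟩
    rw [he'_apply, he, sympForm_cons]
    ext k : 1
    cases k using Fin.cases <;> simp
  | one => exact ⟨1, one_mem _, fun _ _ => rfl⟩
  | mul g h _ _ hg hh =>
    obtain ⟨g', hg', hgg'⟩ := hg
    obtain ⟨h', hh', hhh'⟩ := hh
    exact ⟨g' * h', mul_mem hg' hh', fun x v => by simp only [LinearEquiv.mul_apply, hgg', hhh']⟩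
  | inv g _ hg =>
    obtain ⟨g', hg', hgg'⟩ := hg
    refine ⟨g'⁻¹, inv_mem hg', fun x v => ?_⟩
    rw [LinearEquiv.coe_inv, LinearEquiv.symm_apply_eq, hgg', LinearEquiv.coe_inv,
      LinearEquiv.apply_symm_apply]

/-- The product `L × T` of a submodule of the first factor of `Mⁿ⁺¹ = M × Mⁿ` and a submodule of
the second. -/
def consSubmodule {R M : Type*} [Semiring R] [AddCommMonoid M] [Module R M] (L : Submodule R M)
    (T : Submodule R (Fin n → M)) : Submodule R (Fin (n + 1) → M) :=
  L.comap (LinearMap.proj 0) ⊓ T.comap (LinearMap.funLeft R M Fin.succ)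

theorem mem_consSubmodule {R M : Type*} [Semiring R] [AddCommMonoid M] [Module R M]
    {L : Submodule R M} {T : Submodule R (Fin n → M)} {v : Fin (n + 1) → M} :
    v ∈ consSubmodule L T ↔ v 0 ∈ L ∧ Fin.tail v ∈ T := Iff.rfl

theorem eq_consSubmodule_map_tail {R M : Type*} [Ring R] [AddCommGroup M] [Module R M]
    {L : Submodule R M} {S : Submodule R (Fin (n + 1) → M)}
    (hLS : ∀ x ∈ L, Pi.single 0 x ∈ S) (hSL : ∀ v ∈ S, v 0 ∈ L) :
    S = consSubmodule L (S.map (LinearMap.funLeft R M Fin.succ)) := by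
  ext v
  refine ⟨fun hv => ⟨hSL v hv, v, hv, rfl⟩, ?_⟩
  rintro ⟨hv0, u, hu, huv⟩
  have hv : v = u + Pi.single 0 (v 0 - u 0) := by
    ext k
    cases k using Fin.cases with
    | zero => simp
    | succ k => simpa using (congrFun huv k).symm
  rw [hv]
  exact S.add_mem hu (hLS _ (L.sub_mem hv0 (hSL u hu)))

theorem map_consSubmodule {R M : Type*} [Semiring R] [AddCommMonoid M] [Module R M]
    {L : Submodule R M} {T : Submodule R (Fin n → M)}
    {g : (Fin n → M) ≃ₗ[R] (Fin n → M)} {g' : (Fin (n + 1) → M) ≃ₗ[R] (Fin (n + 1) → M)}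
    (h : ∀ x v, g' (Fin.cons x v) = Fin.cons x (g v)) :
    (consSubmodule L T).map (g' : (Fin (n + 1) → M) →ₗ[R] (Fin (n + 1) → M)) =
      consSubmodule L (T.map (g : (Fin n → M) →ₗ[R] (Fin n → M))) := by
  ext v
  have hv : g'.symm v = Fin.cons (v 0) (g.symm (Fin.tail v)) := by
    rw [LinearEquiv.symm_apply_eq, h, LinearEquiv.apply_symm_apply, Fin.cons_self_tail]
  rw [Submodule.mem_map_equiv, hv, mem_consSubmodule, mem_consSubmodule,
    Submodule.mem_map_equiv, Fin.cons_zero, Fin.tail_cons]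

/-- The labels of `{I,X,Y,Z}^⊗a ⊗ {I,Z}^⊗b ⊗ {I}^⊗(n-a-b)`. -/
def standardSubspace (K : Type*) [Field K] (n a b : ℕ) : Submodule K (PhaseSpace K n) where
  carrier := {v | (∀ k : Fin n, a ≤ (k : ℕ) → (k : ℕ) < a + b → (v k).1 = 0) ∧
    ∀ k : Fin n, a + b ≤ (k : ℕ) → v k = 0}
  zero_mem' := ⟨fun _ _ _ => rfl, fun _ _ => rfl⟩
  add_mem' hu hv :=
    ⟨fun k h h' => by simp [hu.1 k h h', hv.1 k h h'], fun k h => by simp [hu.2 k h, hv.2 k h]⟩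
  smul_mem' c v hv := ⟨fun k h h' => by simp [hv.1 k h h'], fun k h => by simp [hv.2 k h]⟩

theorem mem_standardSubspace {a b : ℕ} {v : PhaseSpace K n} :
    v ∈ standardSubspace K n a b ↔
      (∀ k : Fin n, a ≤ (k : ℕ) → (k : ℕ) < a + b → (v k).1 = 0) ∧
        ∀ k : Fin n, a + b ≤ (k : ℕ) → v k = 0 := Iff.rfl

theorem standardSubspace_zero_zero : standardSubspace K n 0 0 = ⊥ :=
  (Submodule.eq_bot_iff _).mpr fun _ hv => funext fun k => hv.2 k (Nat.zero_le _)

theorem standardSubspace_succ_left (a b : ℕ) :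
    standardSubspace K (n + 1) (a + 1) b = consSubmodule ⊤ (standardSubspace K n a b) := by
  ext v
  simp [mem_consSubmodule, mem_standardSubspace, Fin.forall_fin_succ, Fin.tail,
    Nat.add_right_comm a 1 b]

theorem standardSubspace_zero_succ (b : ℕ) :
    standardSubspace K (n + 1) 0 (b + 1) =
      consSubmodule (LinearMap.ker (LinearMap.fst K K K)) (standardSubspace K n 0 b) := by
  ext v
  simp [mem_consSubmodule, mem_standardSubspace, Fin.forall_fin_succ, Fin.tail, and_assoc]

/-- A subspace on which the symplectic form vanishes. -/
def IsIsotropic (S : Submodule K (PhaseSpace K n)) : Prop :=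
  ∀ u ∈ S, ∀ v ∈ S, sympForm K n u v = 0

namespace IsIsotropic

theorem map_transvection {S : Submodule K (PhaseSpace K n)} (hS : IsIsotropic S)
    {g : PhaseSpace K n ≃ₗ[K] PhaseSpace K n} (hg : g ∈ transvectionSubgroup (sympForm K n)) :
    IsIsotropic (S.map (g : PhaseSpace K n →ₗ[K] PhaseSpace K n)) := by
  rintro _ ⟨u, hu, rfl⟩ _ ⟨v, hv, rfl⟩
  exact (isOrthogonal_of_mem_transvectionSubgroup isAlt_sympForm hg u v).trans (hS u hu v hv)

theorem map_tail {S : Submodule K (PhaseSpace K (n + 1))} (hS : IsIsotropic S)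
    (hfst : ∀ v ∈ S, (v 0).1 = 0) :
    IsIsotropic (S.map (LinearMap.funLeft K (K × K) Fin.succ)) := by
  rintro _ ⟨u, hu, rfl⟩ _ ⟨v, hv, rfl⟩
  have huv := hS u hu v hv
  rw [← Fin.cons_self_tail u, ← Fin.cons_self_tail v, sympForm_cons, hfst u hu, hfst v hv,
    zero_mul, mul_zero, sub_zero, zero_add] at huv
  exact huv

theorem eq_zero_of_standardSubspace {a b : ℕ} (hS : IsIsotropic (standardSubspace K n a b))
    (ha : a ≤ n) : a = 0 := by
  by_contra ha0
  have hmem : ∀ x, Pi.single ⟨0, by lia⟩ x ∈ standardSubspace K n a b := fun x =>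
    ⟨fun k hk _ => by rw [Pi.single_eq_of_ne (by grind)]; rfl,
      fun k hk => Pi.single_eq_of_ne (by grind) _⟩
  simpa [sympForm_single] using hS _ (hmem (1, 0)) _ (hmem (0, 1))

end IsIsotropic

theorem exists_map_eq_consSubmodule_top_of_not_isIsotropic
    {S : Submodule K (PhaseSpace K (n + 1))} (hS : ¬ IsIsotropic S) :
    ∃ g ∈ transvectionSubgroup (sympForm K (n + 1)), ∃ T : Submodule K (PhaseSpace K n),
      S.map (g : PhaseSpace K (n + 1) →ₗ[K] PhaseSpace K (n + 1)) = consSubmodule ⊤ T := by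
  simp only [IsIsotropic, not_forall] at hS
  obtain ⟨u, hu, v, hv, huv⟩ := hS
  obtain ⟨g, hg, hgu, hgv⟩ := exists_transvection_map_pair_eq isAlt_sympForm
    separatingLeft_sympForm (u := u) (v := (sympForm K (n + 1) u v)⁻¹ • v)
    (e := Pi.single 0 (1, 0)) (f := Pi.single 0 (0, 1)) (by simp [sympForm_single, huv])
    (by simp [sympForm_single])
  have hX : (Pi.single 0 (1, 0) : PhaseSpace K (n + 1)) ∈ S.map g.toLinearMap := ⟨u, hu, hgu⟩
  have hZ : (Pi.single 0 (0, 1) : PhaseSpace K (n + 1)) ∈ S.map g.toLinearMap :=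
    ⟨_, S.smul_mem _ hv, hgv⟩
  refine ⟨g, hg, _, eq_consSubmodule_map_tail (fun x _ => ?_) fun _ _ => trivial⟩
  have hx : x = x.1 • (1, 0) + x.2 • (0, 1) := by simp
  rw [hx, Pi.single_add, Pi.single_smul, Pi.single_smul]
  exact add_mem (Submodule.smul_mem _ _ hX) (Submodule.smul_mem _ _ hZ)

theorem IsIsotropic.exists_map_eq_consSubmodule {S : Submodule K (PhaseSpace K (n + 1))}
    (hS : IsIsotropic S) (hS0 : S ≠ ⊥) :
    ∃ g ∈ transvectionSubgroup (sympForm K (n + 1)), ∃ T : Submodule K (PhaseSpace K n),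
      IsIsotropic T ∧ S.map (g : PhaseSpace K (n + 1) →ₗ[K] PhaseSpace K (n + 1)) =
        consSubmodule (LinearMap.ker (LinearMap.fst K K K)) T := by
  obtain ⟨u, hu, hu0⟩ := S.ne_bot_iff.mp hS0
  obtain ⟨g, hg, hgu⟩ := exists_transvection_map_eq isAlt_sympForm separatingLeft_sympForm hu0
    (Pi.single_ne_zero_iff.mpr (by simp) : (Pi.single 0 (0, 1) : PhaseSpace K (n + 1)) ≠ 0)
  have hZ : (Pi.single 0 (0, 1) : PhaseSpace K (n + 1)) ∈ S.map g.toLinearMap := ⟨u, hu, hgu⟩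
  have hgS := hS.map_transvection hg
  have hfst : ∀ v ∈ S.map g.toLinearMap, (v 0).1 = 0 := fun v hv => by
    simpa [sympForm_single] using hgS v hv _ hZ
  refine ⟨g, hg, _, hgS.map_tail hfst, eq_consSubmodule_map_tail ?_ hfst⟩
  rintro ⟨x, z⟩ (rfl : x = 0)
  simpa [← Pi.single_smul] using Submodule.smul_mem _ z hZ

theorem exists_map_eq_standardSubspace : ∀ {n : ℕ} (S : Submodule K (PhaseSpace K n)),
    ∃ g ∈ transvectionSubgroup (sympForm K n), ∃ a b, a + b ≤ n ∧
      S.map (g : PhaseSpace K n →ₗ[K] PhaseSpace K n) = standardSubspace K n a b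
  | 0, S => ⟨1, one_mem _, 0, 0, le_rfl, Subsingleton.elim _ _⟩
  | n + 1, S => by
    by_cases hS : IsIsotropic S
    · rcases eq_or_ne S ⊥ with rfl | hS0
      · exact ⟨1, one_mem _, 0, 0, Nat.zero_le _, by
          rw [Submodule.map_bot, standardSubspace_zero_zero]⟩
      obtain ⟨g, hg, T, hT, hgS⟩ := hS.exists_map_eq_consSubmodule hS0
      obtain ⟨h, hh, a, b, hab, hhT⟩ := exists_map_eq_standardSubspace T
      obtain ⟨h', hh', hcons⟩ := exists_transvection_apply_cons hh
      obtain rfl : a = 0 := (hhT ▸ hT.map_transvection hh).eq_zero_of_standardSubspace (by lia)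
      refine ⟨h' * g, mul_mem hh' hg, 0, b + 1, by lia, ?_⟩
      rw [standardSubspace_zero_succ, ← hhT, ← map_consSubmodule hcons, ← hgS,
        ← Submodule.map_comp]
      rfl
    · obtain ⟨g, hg, T, hgS⟩ := exists_map_eq_consSubmodule_top_of_not_isIsotropic hS
      obtain ⟨h, hh, a, b, hab, hhT⟩ := exists_map_eq_standardSubspace T
      obtain ⟨h', hh', hcons⟩ := exists_transvection_apply_cons hh
      refine ⟨h' * g, mul_mem hh' hg, a + 1, b, by lia, ?_⟩
      rw [standardSubspace_succ_left, ← hhT, ← map_consSubmodule hcons, ← hgS,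
        ← Submodule.map_comp]
      rfl

end PhaseSpace

/-! ### Equality up to phases -/

theorem mem_phases_iff {c : ℂ} : c ∈ phases ↔ c ^ 4 = 1 := by
  have h : c ^ 4 - 1 = (c - 1) * (c + 1) * ((c - Complex.I) * (c + Complex.I)) := by
    linear_combination (c ^ 2 - 1) * Complex.I_sq
  rw [← sub_eq_zero, h]
  simp only [phases, Set.mem_insert_iff, Set.mem_singleton_iff, mul_eq_zero, sub_eq_zero,
    add_eq_zero_iff_eq_neg]
  tauto

/-- Equality up to a factor in `{±1, ±i}`. -/
def PhaseEq {M : Type*} [SMul ℂ M] (x y : M) : Prop :=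
  ∃ c ∈ phases, x = c • y

namespace PhaseEq

theorem refl {M : Type*} [MulAction ℂ M] (x : M) : PhaseEq x x :=
  ⟨1, by simp [mem_phases_iff], (one_smul ℂ x).symm⟩

theorem symm {M : Type*} [MulAction ℂ M] {x y : M} (h : PhaseEq x y) : PhaseEq y x := by
  obtain ⟨c, hc, rfl⟩ := h
  rw [mem_phases_iff] at hc
  have hc0 : c ≠ 0 := by
    rintro rfl
    simp at hc
  exact ⟨c⁻¹, by rw [mem_phases_iff, inv_pow, hc, inv_one], (inv_smul_smul₀ hc0 y).symm⟩

theorem trans {M : Type*} [MulAction ℂ M] {x y z : M} (hxy : PhaseEq x y) (hyz : PhaseEq y z) :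
    PhaseEq x z := by
  obtain ⟨c, hc, rfl⟩ := hxy
  obtain ⟨d, hd, rfl⟩ := hyz
  rw [mem_phases_iff] at hc hd
  exact ⟨c * d, by rw [mem_phases_iff, mul_pow, hc, hd, one_mul], smul_smul c d z⟩

theorem mul {A : Type*} [Ring A] [Algebra ℂ A] {a b c d : A} (hab : PhaseEq a b)
    (hcd : PhaseEq c d) : PhaseEq (a * c) (b * d) := by
  obtain ⟨r, hr, rfl⟩ := hab
  obtain ⟨s, hs, rfl⟩ := hcd
  rw [mem_phases_iff] at hr hs
  exact ⟨r * s, by rw [mem_phases_iff, mul_pow, hr, hs, one_mul], smul_mul_smul_comm r b s d⟩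

end PhaseEq

/-! ### Tensor products of single-qubit operators -/

section QubitTensor

variable {n : ℕ}

/-- The Kronecker product of the single-qubit operators `A k`. -/
def qubitTensor (A : Fin n → Matrix (Fin 2) (Fin 2) ℂ) : Op n :=
  Matrix.of fun i j => ∏ k, A k (i k) (j k)

theorem qubitTensor_mul (A B : Fin n → Matrix (Fin 2) (Fin 2) ℂ) :
    qubitTensor A * qubitTensor B = qubitTensor fun k => A k * B k := by
  ext i j
  simp only [qubitTensor, Matrix.mul_apply, Matrix.of_apply, Finset.prod_univ_sum,
    Fintype.piFinset_univ, Finset.prod_mul_distrib]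

theorem qubitTensor_smul (c : Fin n → ℂ) (A : Fin n → Matrix (Fin 2) (Fin 2) ℂ) :
    (qubitTensor fun k => c k • A k) = (∏ k, c k) • qubitTensor A := by
  ext i j
  simp [qubitTensor, Finset.prod_mul_distrib]

theorem qubitTensor_conjTranspose (A : Fin n → Matrix (Fin 2) (Fin 2) ℂ) :
    (qubitTensor A)ᴴ = qubitTensor fun k => (A k)ᴴ := by
  ext i j
  simp [qubitTensor, Matrix.conjTranspose_apply]

theorem qubitTensor_one :
    qubitTensor (fun _ : Fin n => (1 : Matrix (Fin 2) (Fin 2) ℂ)) = 1 := by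
  ext i j
  by_cases h : i = j
  · subst h
    simp [qubitTensor]
  · obtain ⟨k, hk⟩ := Function.ne_iff.mp h
    rw [Matrix.one_apply_ne h]
    exact Finset.prod_eq_zero (Finset.mem_univ k) (Matrix.one_apply_ne hk)

theorem PhaseEq.qubitTensor {A B : Fin n → Matrix (Fin 2) (Fin 2) ℂ}
    (h : ∀ k, PhaseEq (A k) (B k)) : PhaseEq (qubitTensor A) (qubitTensor B) := by
  choose c hc hAB using h
  simp only [mem_phases_iff] at hc
  refine ⟨∏ k, c k, by simp [mem_phases_iff, ← Finset.prod_pow, hc], ?_⟩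
  rw [← qubitTensor_smul, funext hAB]

end QubitTensor

/-! ### Pauli operators labelled by phase space -/

/-- The index in `σ1` of the single-qubit Pauli operator `X ^ x.1 * Z ^ x.2`, up to phase. -/
def pauliLabel (x : ZMod 2 × ZMod 2) : Fin 4 :=
  if x.1 = 0 then (if x.2 = 0 then 0 else 3) else (if x.2 = 0 then 1 else 2)

theorem pauliLabel_surjective : Function.Surjective pauliLabel := by decide

theorem pauliLabel_eq_zero_iff : ∀ {x}, pauliLabel x = 0 ↔ x = 0 := by decide

theorem pauliLabel_eq_zero_or_eq_three_iff :
    ∀ {x}, (pauliLabel x = 0 ∨ pauliLabel x = 3) ↔ x.1 = 0 := by decide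

theorem pauliLabel_add : ∀ x y, pauliLabel (x + y) = pauliLabel x ^^^ pauliLabel y := by decide

/-- The phases in the multiplication table of the single-qubit Pauli operators, as in `XY = iZ`. -/
def pauliPhase : Matrix (Fin 4) (Fin 4) ℂ :=
  !![1, 1, 1, 1;
    1, 1, Complex.I, -Complex.I;
    1, -Complex.I, 1, Complex.I;
    1, Complex.I, -Complex.I, 1]

theorem pauliPhase_mem_phases (a b : Fin 4) : pauliPhase a b ∈ phases := by
  fin_cases a <;> fin_cases b <;> simp [pauliPhase, phases]

theorem σ1_mul (a b : Fin 4) : σ1 a * σ1 b = pauliPhase a b • σ1 (a ^^^ b) := by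
  fin_cases a <;> fin_cases b <;> ext i j <;> fin_cases i <;> fin_cases j <;>
    simp [σ1, pauliPhase]

theorem σ1_mul_self (a : Fin 4) : σ1 a * σ1 a = 1 := by
  fin_cases a <;> simp [σ1, Matrix.one_fin_two]

theorem σ1_conjTranspose (a : Fin 4) : (σ1 a)ᴴ = σ1 a := by
  fin_cases a <;> ext i j <;> fin_cases i <;> fin_cases j <;> simp [σ1]

/-- The sign `(-1) ^ x`. -/
noncomputable def binarySign : AddChar (ZMod 2) ℂ :=
  AddChar.zmodChar 2 neg_one_sq

theorem binarySign_one : binarySign 1 = -1 := by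
  simp [binarySign, AddChar.zmodChar_apply, ZMod.val_one]

theorem binarySign_sum {ι : Type*} (s : Finset ι) (f : ι → ZMod 2) :
    binarySign (∑ i ∈ s, f i) = ∏ i ∈ s, binarySign (f i) := by
  have h := map_prod binarySign.toMonoidHom (fun i => Multiplicative.ofAdd (f i)) s
  rwa [← ofAdd_sum] at h

theorem pauliPhase_pauliLabel_comm (x y : ZMod 2 × ZMod 2) :
    pauliPhase (pauliLabel x) (pauliLabel y) =
      binarySign (x.1 * y.2 - x.2 * y.1) * pauliPhase (pauliLabel y) (pauliLabel x) := by
  have key : ∀ z : ZMod 2, z = 0 ∨ z = 1 := by decide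
  obtain ⟨x₁, x₂⟩ := x
  obtain ⟨y₁, y₂⟩ := y
  rcases key x₁ with rfl | rfl <;> rcases key x₂ with rfl | rfl <;>
    rcases key y₁ with rfl | rfl <;> rcases key y₂ with rfl | rfl <;>
    simp [pauliLabel, pauliPhase, binarySign_one]

theorem σ1_pauliLabel_mul_comm (x y : ZMod 2 × ZMod 2) :
    σ1 (pauliLabel x) * σ1 (pauliLabel y) =
      binarySign (x.1 * y.2 - x.2 * y.1) • (σ1 (pauliLabel y) * σ1 (pauliLabel x)) := by
  rw [σ1_mul, σ1_mul, smul_smul, ← pauliPhase_pauliLabel_comm, ← pauliLabel_add,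
    ← pauliLabel_add, add_comm y x]

section PauliOp

variable {n : ℕ}

/-- The unsigned Pauli operator labelled by a point of the binary phase space. -/
noncomputable def pauliOp (v : PhaseSpace (ZMod 2) n) : Op n :=
  pauli (pauliLabel ∘ v)

theorem pauliOp_eq_qubitTensor (v : PhaseSpace (ZMod 2) n) :
    pauliOp v = qubitTensor fun k => σ1 (pauliLabel (v k)) := rfl

theorem pauliOp_zero : pauliOp (0 : PhaseSpace (ZMod 2) n) = 1 :=
  qubitTensor_one

theorem isSelfAdjoint_pauliOp (v : PhaseSpace (ZMod 2) n) : IsSelfAdjoint (pauliOp v) := by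
  rw [IsSelfAdjoint, Matrix.star_eq_conjTranspose]
  simp only [pauliOp_eq_qubitTensor, qubitTensor_conjTranspose, σ1_conjTranspose]

theorem pauliOp_mul_self (v : PhaseSpace (ZMod 2) n) : pauliOp v * pauliOp v = 1 := by
  simp only [pauliOp_eq_qubitTensor, qubitTensor_mul, σ1_mul_self, qubitTensor_one]

theorem pauliOp_mul (u v : PhaseSpace (ZMod 2) n) :
    PhaseEq (pauliOp u * pauliOp v) (pauliOp (u + v)) := by
  simp only [pauliOp_eq_qubitTensor, qubitTensor_mul, Pi.add_apply, pauliLabel_add]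
  exact .qubitTensor fun k => ⟨_, pauliPhase_mem_phases _ _, σ1_mul _ _⟩

theorem pauliOp_mul_comm (u v : PhaseSpace (ZMod 2) n) :
    pauliOp u * pauliOp v =
      binarySign (sympForm (ZMod 2) n u v) • (pauliOp v * pauliOp u) := by
  rw [sympForm_apply, binarySign_sum]
  simp only [pauliOp_eq_qubitTensor, qubitTensor_mul]
  rw [← qubitTensor_smul]
  simp only [← σ1_pauliLabel_mul_comm]

theorem mem_pauliGroup_iff {P : Op n} : P ∈ PauliGroup n ↔ ∃ v, PhaseEq P (pauliOp v) := by
  have h : P ∈ PauliGroup n ↔ ∃ a, PhaseEq P (pauli a) := by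
    simp only [PauliGroup, PhaseEq, Set.mem_ofPred_eq]
    grind
  exact h.trans pauliLabel_surjective.comp_left.exists

theorem exists_mem_standardSubspace_phaseEq_pauliOp_iff {a b : ℕ} {P : Op n} :
    (∃ v ∈ standardSubspace (ZMod 2) n a b, PhaseEq P (pauliOp v)) ↔
      ∃ l : Fin n → Fin 4,
        ((∀ k : Fin n, a ≤ (k : ℕ) → (k : ℕ) < a + b → (l k = 0 ∨ l k = 3)) ∧
          ∀ k : Fin n, a + b ≤ (k : ℕ) → l k = 0) ∧ PhaseEq P (pauli l) := by
  rw [pauliLabel_surjective.comp_left.exists]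
  simp only [Function.comp_apply, pauliLabel_eq_zero_or_eq_three_iff]
  simp only [pauliLabel_eq_zero_iff]
  rfl

/-- The labels of the operators in a monoid of operators, up to phase. -/
def labelSubmodule (Q : Submonoid (Op n)) : Submodule (ZMod 2) (PhaseSpace (ZMod 2) n) where
  carrier := {v | ∃ q ∈ Q, PhaseEq q (pauliOp v)}
  zero_mem' := ⟨1, Q.one_mem, by rw [pauliOp_zero]; exact .refl (1 : Op n)⟩
  add_mem' := by
    rintro u v ⟨p, hp, hpu⟩ ⟨q, hq, hqv⟩
    exact ⟨p * q, Q.mul_mem hp hq, (hpu.mul hqv).trans (pauliOp_mul u v)⟩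
  smul_mem' c v hv := by
    obtain rfl | rfl : c = 0 ∨ c = 1 := by revert c; decide
    · exact ⟨1, Q.one_mem, by rw [zero_smul, pauliOp_zero]; exact .refl (1 : Op n)⟩
    · rwa [one_smul]

theorem mem_labelSubmodule {Q : Submonoid (Op n)} {v : PhaseSpace (ZMod 2) n} :
    v ∈ labelSubmodule Q ↔ ∃ q ∈ Q, PhaseEq q (pauliOp v) := Iff.rfl

end PauliOp

/-! ### Quarter turns -/

section QuarterTurn

variable {A : Type*} [Ring A] [Algebra ℂ A] {a a' b : A}

/-- The element `exp (iπa/4)`, for an involution `a`. -/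
noncomputable def quarterTurn (a : A) : A :=
  ((√2 : ℝ) : ℂ)⁻¹ • (1 + Complex.I • a)

theorem star_quarterTurn [StarRing A] [StarModule ℂ A] (ha : IsSelfAdjoint a) :
    star (quarterTurn a) = quarterTurn (-a) := by
  simp [quarterTurn, ha.star_eq]

theorem inv_sqrt_two_mul_self : ((√2 : ℝ) : ℂ)⁻¹ * ((√2 : ℝ) : ℂ)⁻¹ = 1 / 2 := by
  rw [← mul_inv, ← Complex.ofReal_mul, Real.mul_self_sqrt zero_le_two]
  norm_num

theorem quarterTurn_mul_self (ha : a * a = 1) :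
    quarterTurn a * quarterTurn a = Complex.I • a := by
  simp only [quarterTurn, smul_mul_smul_comm, inv_sqrt_two_mul_self, mul_add, add_mul, one_mul,
    mul_one, ha, Complex.I_mul_I]
  module

theorem quarterTurn_mul_quarterTurn_neg (ha : a * a = 1) :
    quarterTurn a * quarterTurn (-a) = 1 := by
  simp only [quarterTurn, smul_mul_smul_comm, inv_sqrt_two_mul_self, mul_add, add_mul, one_mul,
    mul_one, mul_neg, smul_neg, ha, Complex.I_mul_I]
  module

theorem semiconjBy_quarterTurn (h : SemiconjBy b a a') :
    SemiconjBy b (quarterTurn a) (quarterTurn a') := by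
  simp only [SemiconjBy, quarterTurn, mul_smul_comm, smul_mul_assoc, mul_add, add_mul, mul_one,
    one_mul, h.eq]

end QuarterTurn

/-! ### Clifford operators implementing symplectic maps -/

section Implements

variable {n : ℕ}

/-- The unitary `W` acts by conjugation on Pauli operators, up to phases, as `g` does on their
labels. -/
def Implements (W : Op n) (g : PhaseSpace (ZMod 2) n ≃ₗ[ZMod 2] PhaseSpace (ZMod 2) n) : Prop :=
  W ∈ Matrix.unitaryGroup (QubitIdx n) ℂ ∧
    ∀ v, PhaseEq (W * pauliOp v * Wᴴ) (pauliOp (g v))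

variable {W W' : Op n} {g g' : PhaseSpace (ZMod 2) n ≃ₗ[ZMod 2] PhaseSpace (ZMod 2) n}

namespace Implements

theorem phaseEq_conj (h : Implements W g) {q : Op n} {v : PhaseSpace (ZMod 2) n}
    (hq : PhaseEq q (pauliOp v)) : PhaseEq (W * q * Wᴴ) (pauliOp (g v)) :=
  (((PhaseEq.refl W).mul hq).mul (.refl Wᴴ)).trans (h.2 v)

theorem isClifford (h : Implements W g) : IsClifford W := by
  refine ⟨h.1, fun P hP => ?_⟩
  obtain ⟨v, hv⟩ := mem_pauliGroup_iff.mp hP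
  exact mem_pauliGroup_iff.mpr ⟨g v, h.phaseEq_conj hv⟩

theorem one : Implements (1 : Op n) 1 :=
  ⟨one_mem _, fun v => by simpa using PhaseEq.refl (pauliOp v)⟩

theorem mul (h : Implements W g) (h' : Implements W' g') : Implements (W * W') (g * g') := by
  refine ⟨mul_mem h.1 h'.1, fun v => ?_⟩
  have hv := h.phaseEq_conj (h'.2 v)
  rw [Matrix.conjTranspose_mul]
  simp only [Matrix.mul_assoc] at hv ⊢
  exact hv

theorem inv (h : Implements W g) : Implements Wᴴ g⁻¹ := by
  have hW : Wᴴ * W = 1 := Unitary.star_mul_self_of_mem h.1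
  refine ⟨Unitary.star_mem h.1, fun v => .symm ?_⟩
  have hv : PhaseEq (W * pauliOp (g⁻¹ v) * Wᴴ) (pauliOp v) := by
    simpa using h.2 (g⁻¹ v)
  have hconj := ((PhaseEq.refl Wᴴ).mul hv).mul (.refl W)
  rw [Matrix.conjTranspose_conjTranspose]
  rwa [← mul_assoc, ← mul_assoc, hW, one_mul, mul_assoc, hW, mul_one] at hconj

end Implements

theorem implements_quarterTurn {v : PhaseSpace (ZMod 2) n}
    (hg : ∀ u, g u = u + sympForm (ZMod 2) n u v • v) :
    Implements (quarterTurn (pauliOp v)) g := by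
  have hstar : (quarterTurn (pauliOp v))ᴴ = quarterTurn (-pauliOp v) :=
    star_quarterTurn (isSelfAdjoint_pauliOp v)
  have hunit := quarterTurn_mul_quarterTurn_neg (pauliOp_mul_self v)
  refine ⟨Matrix.mem_unitaryGroup_iff.mpr ?_, fun u => ?_⟩
  · rw [Matrix.star_eq_conjTranspose, hstar, hunit]
  rw [hstar, hg]
  have hsymp : ∀ c : ZMod 2, c = 0 ∨ c = 1 := by decide
  rcases hsymp (sympForm (ZMod 2) n u v) with huv | huv
  · have hcomm : SemiconjBy (pauliOp u) (pauliOp v) (pauliOp v) := by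
      rw [SemiconjBy, pauliOp_mul_comm, huv, AddChar.map_zero_eq_one, one_smul]
    rw [← (semiconjBy_quarterTurn hcomm).eq, mul_assoc, hunit, mul_one, huv, zero_smul, add_zero]
    exact .refl _
  · have hanticomm : SemiconjBy (pauliOp u) (-pauliOp v) (pauliOp v) := by
      rw [SemiconjBy, mul_neg, pauliOp_mul_comm, huv, binarySign_one, neg_one_smul, neg_neg]
    have hneg : -pauliOp v * -pauliOp v = 1 := by rw [neg_mul_neg, pauliOp_mul_self]
    rw [← (semiconjBy_quarterTurn hanticomm).eq, mul_assoc, quarterTurn_mul_self hneg, huv,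
      one_smul, smul_neg, ← neg_smul, mul_smul_comm]
    exact PhaseEq.trans ⟨-Complex.I, by simp [phases], rfl⟩ (pauliOp_mul u v)

theorem exists_implements (hg : g ∈ transvectionSubgroup (sympForm (ZMod 2) n)) :
    ∃ W : Op n, Implements W g := by
  induction hg using Subgroup.closure_induction with
  | mem e he =>
    obtain ⟨c, v, he⟩ := he
    have hc : c * c = c := (by decide : ∀ c : ZMod 2, c * c = c) c
    refine ⟨_, implements_quarterTurn (v := c • v) fun u => ?_⟩
    rw [he, map_smul, smul_smul, smul_eq_mul, mul_right_comm, hc]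
  | one => exact ⟨1, .one⟩
  | mul g h _ _ hg hh =>
    obtain ⟨W, hW⟩ := hg
    obtain ⟨U, hU⟩ := hh
    exact ⟨W * U, hW.mul hU⟩
  | inv g _ hg =>
    obtain ⟨W, hW⟩ := hg
    exact ⟨Wᴴ, hW.inv⟩

theorem Implements.exists_phaseEq_conj_iff (hW : Implements W g) {Q : Submonoid (Op n)}
    (hQ : ∀ q ∈ Q, q ∈ PauliGroup n) {P : Op n} :
    (∃ q ∈ Q, PhaseEq P (W * q * Wᴴ)) ↔
      ∃ v ∈ (labelSubmodule Q).map g.toLinearMap, PhaseEq P (pauliOp v) := by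
  constructor
  · rintro ⟨q, hq, hP⟩
    obtain ⟨v, hv⟩ := mem_pauliGroup_iff.mp (hQ q hq)
    exact ⟨g v, ⟨v, mem_labelSubmodule.mpr ⟨q, hq, hv⟩, rfl⟩, hP.trans (hW.phaseEq_conj hv)⟩
  · rintro ⟨_, ⟨v, hv, rfl⟩, hP⟩
    obtain ⟨q, hq, hqv⟩ := mem_labelSubmodule.mp hv
    exact ⟨q, hq, hP.trans (hW.phaseEq_conj hqv).symm⟩

end Implements

/-- every subgroup of the Pauli group is, up to phases, Clifford-equivalent
to a standard form `{I,X,Y,Z}^⊗n₁ ⊗ {I,Z}^⊗n₂ ⊗ {I}^⊗n₃`. -/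
theorem stmt12 {n : ℕ} (Q : Set (Op n)) (hQP : Q ⊆ PauliGroup n)
    (hQ1 : (1 : Op n) ∈ Q) (hQm : ∀ g ∈ Q, ∀ h ∈ Q, g * h ∈ Q)
    (hQi : ∀ g ∈ Q, gᴴ ∈ Q) :
    ∃ W : Op n, IsClifford W ∧ ∃ n₁ n₂ n₃ : ℕ, n₁ + n₂ + n₃ = n ∧
      {P : Op n | ∃ c ∈ phases, ∃ q ∈ Q, P = c • (W * q * Wᴴ)} =
      {P : Op n | ∃ c ∈ phases, ∃ a : Fin n → Fin 4,
        (∀ k : Fin n, n₁ ≤ (k : ℕ) → (k : ℕ) < n₁ + n₂ → (a k = 0 ∨ a k = 3)) ∧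
        (∀ k : Fin n, n₁ + n₂ ≤ (k : ℕ) → a k = 0) ∧
        P = c • pauli a} := by
  let M : Submonoid (Op n) := ⟨⟨Q, fun ha hb => hQm _ ha _ hb⟩, hQ1⟩
  obtain ⟨g, hg, n₁, n₂, hn, hmap⟩ := exists_map_eq_standardSubspace (labelSubmodule M)
  obtain ⟨W, hW⟩ := exists_implements hg
  refine ⟨W, hW.isClifford, n₁, n₂, n - (n₁ + n₂), by lia, Set.ext fun P => ?_⟩
  calc (∃ c ∈ phases, ∃ q ∈ Q, P = c • (W * q * Wᴴ))
      ↔ ∃ q ∈ M, PhaseEq P (W * q * Wᴴ) :=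
        ⟨fun ⟨c, hc, q, hq, h⟩ => ⟨q, hq, c, hc, h⟩, fun ⟨q, hq, c, hc, h⟩ => ⟨c, hc, q, hq, h⟩⟩
    _ ↔ ∃ v ∈ standardSubspace (ZMod 2) n n₁ n₂, PhaseEq P (pauliOp v) :=
        hmap ▸ hW.exists_phaseEq_conj_iff (Q := M) hQP
    _ ↔ _ := exists_mem_standardSubspace_phaseEq_pauliOp_iff
    _ ↔ _ :=
        ⟨fun ⟨a, ⟨hZ, hI⟩, c, hc, h⟩ => ⟨c, hc, a, hZ, hI, h⟩,
          fun ⟨c, hc, a, hZ, hI, h⟩ => ⟨a, ⟨hZ, hI⟩, c, hc, h⟩⟩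
end

section
/- Let G be a subgroup of U(2^N) and t ∈ ℕ. There exist finitely many pairs (λⱼ, Uⱼ) with Uⱼ ∈ C_{N,G}, λⱼ ∈ ℝ, Σλⱼ = 1, and Σⱼ λⱼ Uⱼ^⊗t L Uⱼ†^⊗t = Φ_{t,U_{N,G}}(L) for all L (i.e., a weighted G-symmetric unitary t-design supported on C_{N,G}) if and only if C_{N,G} itself is an (unweighted) G-symmetric unitary t-design, i.e., Φ_{t,C_{N,G}} = Φ_{t,U_{N,G}}. -/
open Matrix MeasureTheory

/-!
Write `ρ V` for the superoperator `L ↦ V^⊗t L (V^⊗t)†`, which is multiplicative in `V`. A twirl is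
an average `∫ ρ dμ` in the finite-dimensional algebra of superoperators, and a weighted design
supported on `S` says exactly that `∫ ρ dν` lies in the real affine span of `ρ '' S`. Let `μ` be
carried by `S` and invariant under right multiplication by `S`, and `ν` invariant under left
multiplication by `S`.

* Right invariance gives `(∫ ρ dμ) * ρ V = ∫ ρ dμ` for `V ∈ S`, and this persists with `ρ V`
  replaced by any point of the affine span of `ρ '' S`; left invariance gives
  `(∫ ρ dμ) * (∫ ρ dν) = ∫ ρ dν`. So if `∫ ρ dν` lies in that affine span, the two averages agree.
* Conversely, an affine subspace of a finite-dimensional space is closed and convex, so it contains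
  the average of any probability measure carried by it; hence `∫ ρ dμ` is in the affine span.
-/

section AffineSpan

theorem mem_affineSpan_image_iff_exists_fin {k E ι : Type*} [Ring k] [Nontrivial k]
    [AddCommGroup E] [Module k E] {f : ι → E} {s : Set ι} {x : E} :
    x ∈ affineSpan k (f '' s) ↔ ∃ (m : ℕ) (w : Fin m → k) (p : Fin m → ι),
      (∀ j, p j ∈ s) ∧ ∑ j, w j = 1 ∧ ∑ j, w j • f (p j) = x := by
  constructor
  · intro hx
    obtain ⟨F, w, hF, hw, rfl⟩ := eq_affineCombination_of_mem_affineSpan_image hx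
    let e := F.equivFin.symm
    refine ⟨F.card, fun j => w (e j), fun j => e j, fun j => hF (e j).2, ?_, ?_⟩
    · rw [e.sum_comp fun i => w i, Finset.sum_coe_sort, hw]
    · rw [e.sum_comp fun i : F => w i • f i, Finset.sum_coe_sort F fun i => w i • f i,
        F.affineCombination_eq_linear_combination _ _ hw]
  · rintro ⟨m, w, p, hp, hw, rfl⟩
    rw [← Finset.univ.affineCombination_eq_linear_combination _ _ hw]
    exact affineSpan_mono k (Set.range_subset_iff.2 fun j => Set.mem_image_of_mem f (hp j))
      (affineCombination_mem_affineSpan hw fun j => f (p j))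

theorem mul_eq_of_mem_affineSpan {k A : Type*} [Ring k] [NonUnitalNonAssocRing A] [Module k A]
    [SMulCommClass k A A] {a b x : A} {s : Set A} (hs : ∀ y ∈ s, a * y = b)
    (hx : x ∈ affineSpan k s) : a * x = b :=
  affineSpan_induction (p := fun y => a * y = b) hx hs fun c u v w hu hv hw => by
    rw [vsub_eq_sub, vadd_eq_add, mul_add, mul_smul_comm, mul_sub, hu, hv, hw, sub_self, smul_zero,
      zero_add]

theorem integral_mem_affineSpan_image {Ω E : Type*} [MeasurableSpace Ω] [NormedAddCommGroup E]
    [NormedSpace ℝ E] [FiniteDimensional ℝ E] {μ : Measure Ω} [IsProbabilityMeasure μ]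
    {f : Ω → E} {s : Set Ω} (hf : Integrable f μ) (hs : ∀ᵐ x ∂μ, x ∈ s) :
    ∫ x, f x ∂μ ∈ affineSpan ℝ (f '' s) :=
  have : CompleteSpace E := FiniteDimensional.complete ℝ E
  (AffineSubspace.convex _).integral_mem (AffineSubspace.closed_of_finiteDimensional _)
    (hs.mono fun _ hx => subset_affineSpan ℝ _ (Set.mem_image_of_mem f hx)) hf

end AffineSpan

section MulHomAverage

variable {M A : Type*} [Mul M] [MeasurableSpace M] [MeasurableMul M]
  [NormedRing A] [NormedAlgebra ℝ A]
  {ρ : M →ₙ* A} {μ ν : Measure M}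

theorem integral_mul_eq_of_map_mul_right (hρ : Integrable ρ μ) {v : M}
    (hv : μ.map (· * v) = μ) : (∫ u, ρ u ∂μ) * ρ v = ∫ u, ρ u ∂μ := by
  calc (∫ u, ρ u ∂μ) * ρ v
      = ∫ u, ρ (u * v) ∂μ := by simp only [map_mul, integral_mul_const_of_integrable hρ]
    _ = ∫ u, ρ u ∂(μ.map (· * v)) :=
        (integral_map (measurable_mul_const v).aemeasurable
          (hv.symm ▸ hρ.aestronglyMeasurable)).symm
    _ = ∫ u, ρ u ∂μ := by rw [hv]

theorem mul_integral_eq_of_map_mul_left (hρ : Integrable ρ μ) {v : M}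
    (hv : μ.map (v * ·) = μ) : ρ v * ∫ u, ρ u ∂μ = ∫ u, ρ u ∂μ := by
  calc ρ v * ∫ u, ρ u ∂μ
      = ∫ u, ρ (v * u) ∂μ := by simp only [map_mul, integral_const_mul_of_integrable hρ]
    _ = ∫ u, ρ u ∂(μ.map (v * ·)) :=
        (integral_map (measurable_const_mul v).aemeasurable
          (hv.symm ▸ hρ.aestronglyMeasurable)).symm
    _ = ∫ u, ρ u ∂μ := by rw [hv]

theorem integral_mem_affineSpan_image_iff_integral_eq [FiniteDimensional ℝ A]
    [IsProbabilityMeasure μ] {S : Set M} (hμ : Integrable ρ μ) (hν : Integrable ρ ν)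
    (hμS : ∀ᵐ u ∂μ, u ∈ S) (hμ_inv : ∀ v ∈ S, μ.map (· * v) = μ)
    (hν_inv : ∀ v ∈ S, ν.map (v * ·) = ν) :
    ∫ u, ρ u ∂ν ∈ affineSpan ℝ (ρ '' S) ↔ ∫ u, ρ u ∂μ = ∫ u, ρ u ∂ν := by
  have : CompleteSpace A := FiniteDimensional.complete ℝ A
  refine ⟨fun hmem => ?_, fun h => h ▸ integral_mem_affineSpan_image hμ hμS⟩
  have absorb_right : (∫ u, ρ u ∂μ) * ∫ u, ρ u ∂ν = ∫ u, ρ u ∂μ :=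
    mul_eq_of_mem_affineSpan
      (Set.forall_mem_image.2 fun v hv => integral_mul_eq_of_map_mul_right hμ (hμ_inv v hv)) hmem
  calc ∫ u, ρ u ∂μ
      = ∫ u, ρ u * ∫ w, ρ w ∂ν ∂μ := by rw [integral_mul_const_of_integrable hμ, absorb_right]
    _ = ∫ _, ∫ w, ρ w ∂ν ∂μ := integral_congr_ae <|
        hμS.mono fun v hv => mul_integral_eq_of_map_mul_left hν (hν_inv v hv)
    _ = ∫ w, ρ w ∂ν := by rw [integral_const, probReal_univ, one_smul]

theorem exists_weights_sum_apply_eq_integral_apply_iff {E : Type*} [NormedAddCommGroup E]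
    [NormedSpace ℂ E] [FiniteDimensional ℂ E] {ρ : M →ₙ* (E →L[ℂ] E)} [IsProbabilityMeasure μ]
    {S : Set M} (hμ : Integrable ρ μ) (hν : Integrable ρ ν) (hμS : ∀ᵐ u ∂μ, u ∈ S)
    (hμ_inv : ∀ v ∈ S, μ.map (· * v) = μ) (hν_inv : ∀ v ∈ S, ν.map (v * ·) = ν) :
    (∃ (m : ℕ) (w : Fin m → ℝ) (p : Fin m → M), (∀ j, p j ∈ S) ∧ ∑ j, w j = 1 ∧
        ∀ x : E, ∑ j, (w j : ℂ) • ρ (p j) x = (∫ u, ρ u ∂ν) x) ↔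
      ∀ x : E, (∫ u, ρ u ∂μ) x = (∫ u, ρ u ∂ν) x := by
  have averages_eq_iff := integral_mem_affineSpan_image_iff_integral_eq hμ hν hμS hμ_inv hν_inv
  simpa only [mem_affineSpan_image_iff_exists_fin, ContinuousLinearMap.ext_iff,
    _root_.sum_apply, _root_.smul_apply, Complex.coe_smul]
    using averages_eq_iff

end MulHomAverage

theorem integrable_of_continuous_of_ae_mem_isCompact {X E : Type*} [TopologicalSpace X] [T2Space X]
    [MeasurableSpace X] [BorelSpace X] [SecondCountableTopology X] [NormedAddCommGroup E]
    {μ : Measure X} [IsFiniteMeasure μ] {f : X → E} {K : Set X} (hf : Continuous f)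
    (hK : IsCompact K) (hμ : ∀ᵐ x ∂μ, x ∈ K) : Integrable f μ := by
  rw [← Measure.restrict_eq_self_of_ae_mem hμ]
  exact hf.continuousOn.integrableOn_compact hK

section TensorPower

variable {N : ℕ}

theorem tpow_mul (t : ℕ) (A B : Op N) : tpow t (A * B) = tpow t A * tpow t B := by
  ext i j
  simp only [tpow, Matrix.of_apply, Matrix.mul_apply, ← Finset.prod_mul_distrib]
  rw [Finset.prod_univ_sum, Fintype.piFinset_univ]

theorem continuous_tpow (t : ℕ) : Continuous (tpow (N := N) t) := by
  refine continuous_matrix fun i j => ?_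
  simp only [tpow, Matrix.of_apply]
  fun_prop

end TensorPower

section Twirl

open scoped Matrix.Norms.L2Operator

theorem isCompact_unitaryGroup {n 𝕜 : Type*} [Fintype n] [DecidableEq n] [RCLike 𝕜] :
    IsCompact (Matrix.unitaryGroup n 𝕜 : Set (Matrix n n 𝕜)) := by
  have : ProperSpace (Matrix n n 𝕜) := FiniteDimensional.proper 𝕜 _
  refine Metric.isCompact_of_isClosed_isBounded isClosed_unitary
    (isBounded_iff_forall_norm_le.2 ⟨1, fun U hU => ?_⟩)
  nontriviality Matrix n n 𝕜
  exact (CStarRing.norm_of_mem_unitary hU).le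

variable {N t : ℕ} {μ : Measure (Op N)}

instance OpBorelSpace : BorelSpace (Op N) := ⟨rfl⟩

/-- The superoperator `L ↦ A^⊗t L (A^⊗t)†`, whose averages over `A` are the twirling channels. It is
bundled as a multiplicative map in `A`, and valued in continuous linear maps so that it can be
integrated. -/
noncomputable def tpowConj (t : ℕ) : Op N →ₙ* (BigOp N t →L[ℂ] BigOp N t) where
  toFun A := ContinuousLinearMap.mulLeftRight ℂ (BigOp N t) (tpow t A) (tpow t A)ᴴ
  map_mul' A B := by
    ext1 L
    simp only [ContinuousLinearMap.mulLeftRight_apply, mul_apply_eq_comp, tpow_mul,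
      Matrix.conjTranspose_mul, Matrix.mul_assoc]

theorem tpowConj_apply (A : Op N) (L : BigOp N t) :
    tpowConj t A L = tpow t A * L * (tpow t A)ᴴ := rfl

theorem continuous_tpowConj (t : ℕ) : Continuous (tpowConj (N := N) t) := by
  have htpow := continuous_tpow (N := N) t
  change Continuous fun A => ContinuousLinearMap.mulLeftRight ℂ (BigOp N t) (tpow t A) (tpow t A)ᴴ
  fun_prop

theorem integrable_tpowConj [IsFiniteMeasure μ] (t : ℕ)
    (hμ : ∀ᵐ U ∂μ, U ∈ Matrix.unitaryGroup (QubitIdx N) ℂ) : Integrable (tpowConj t) μ :=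
  integrable_of_continuous_of_ae_mem_isCompact (f := tpowConj t) (continuous_tpowConj t)
    isCompact_unitaryGroup hμ

theorem integral_tpowConj_apply (hμ : Integrable (tpowConj t) μ) (L : BigOp N t) :
    (∫ U, tpowConj t U ∂μ) L = twirl t μ L := by
  rw [ContinuousLinearMap.integral_apply hμ]
  ext i j
  exact ((Matrix.entryLinearMap ℂ ℂ i j).toContinuousLinearMap.integral_comp_comm
    (hμ.apply_continuousLinearMap L)).symm

theorem stmt19_general {N : ℕ} (t : ℕ) {S : Set (Op N)}
    (hS : S ⊆ Matrix.unitaryGroup (QubitIdx N) ℂ) {μ ν : Measure (Op N)}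
    [IsProbabilityMeasure μ] [IsFiniteMeasure ν] (hμS : ∀ᵐ U ∂μ, U ∈ S)
    (hν : ∀ᵐ U ∂ν, U ∈ Matrix.unitaryGroup (QubitIdx N) ℂ)
    (hμ_inv : ∀ V ∈ S, μ.map (fun U => U * V) = μ)
    (hν_inv : ∀ V ∈ S, ν.map (fun U => V * U) = ν) :
    (∃ (m : ℕ) (lam : Fin m → ℝ) (U : Fin m → Op N),
        (∀ j, U j ∈ S) ∧ ∑ j, lam j = 1 ∧
        ∀ L : BigOp N t,
          ∑ j, (lam j : ℂ) • (tpow t (U j) * L * (tpow t (U j))ᴴ) = twirl t ν L) ↔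
      ∀ L : BigOp N t, twirl t μ L = twirl t ν L := by
  have hμ_int := integrable_tpowConj t (hμS.mono fun _ hU => hS hU)
  have hν_int := integrable_tpowConj t hν
  simpa only [tpowConj_apply, integral_tpowConj_apply hμ_int, integral_tpowConj_apply hν_int]
    using exists_weights_sum_apply_eq_integral_apply_iff hμ_int hν_int hμS hμ_inv hν_inv

end Twirl

/-- there is a weighted `G`-symmetric unitary `t`-design supported on
`C_{N,G}` if and only if `C_{N,G}` itself is an (unweighted) `G`-symmetric unitary
`t`-design. -/
theorem stmt19 {N : ℕ} (t : ℕ) (G : Set (Op N)) (hG : IsUnitarySubgroup G)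
    (μC μU : Measure (Op N)) [IsProbabilityMeasure μC] [IsProbabilityMeasure μU]
    (hCsupp : ∀ᵐ U ∂μC, U ∈ CliffordSym N G)
    (hUsupp : ∀ᵐ U ∂μU, U ∈ UnitarySym N G)
    (hCinvL : ∀ V ∈ CliffordSym N G, Measure.map (fun U => V * U) μC = μC)
    (hCinvR : ∀ V ∈ CliffordSym N G, Measure.map (fun U => U * V) μC = μC)
    (hUinvL : ∀ V ∈ UnitarySym N G, Measure.map (fun U => V * U) μU = μU)
    (hUinvR : ∀ V ∈ UnitarySym N G, Measure.map (fun U => U * V) μU = μU) :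
    (∃ (m : ℕ) (lam : Fin m → ℝ) (U : Fin m → Op N),
        (∀ j, U j ∈ CliffordSym N G) ∧ (∑ j, lam j) = 1 ∧
        ∀ L : BigOp N t,
          (∑ j, (lam j : ℂ) • (tpow t (U j) * L * (tpow t (U j))ᴴ)) = twirl t μU L) ↔
      (∀ L : BigOp N t, twirl t μC L = twirl t μU L) :=
  stmt19_general t (fun _ hU => hU.2.1) hCsupp (hUsupp.mono fun _ hU => hU.1) hCinvR
    fun V hV => hUinvL V hV.2
end
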